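/- Let X be a type, H a real inner product space, κ > 0, and ev : H →ₗ[ℝ] (X → ℝ) a linear map satisfying |ev f x| ≤ κ·‖f‖ for all f ∈ H, x ∈ X. Let n ≥ 1, (x₁,y₁),…,(xₙ,yₙ) ∈ X × ℝ with |yₖ| ≤ C_y for all k, λ > 0, m ≥ 2 a real number, and fix i with 1 ≤ i ≤ n. Suppose f_Z minimizes over H the objective J_Z(f) = (1/n)·Σₖ₌₁ⁿ (yₖ − ev f xₖ)² + λ·‖f‖^m, and f_{Z^i} minimizes over H the objective J_{Z^i}(f) = (1/n)·Σ_{k≠i} (yₖ − ev f xₖ)² + λ·‖f‖^m. Then, with C = 2·(C_y + κ·(C_y²/λ)^(1/m)): ‖f_Z − f_{Z^i}‖ ≤ (2^(m−2)·C·κ/(λ·n))^(1/(m−1)). -/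

import Mathlib

theorem clarkson_aux {H : Type*} [NormedAddCommGroup H] [InnerProductSpace ℝ H]
    (u v : H) (m : ℝ) (hm : 2 ≤ m) :
    2 * ‖u‖ ^ m + 2 * ‖v‖ ^ m ≤ ‖u + v‖ ^ m + ‖u - v‖ ^ m := by
  have key : ∀ w : H, ‖w‖ ^ m = (‖w‖ ^ 2) ^ (m / 2) := by
    intro w
    rw [← Real.rpow_natCast, ← Real.rpow_mul (norm_nonneg _)]
    congr 1
    push_cast
    ring
  have hp : 1 ≤ m / 2 := by linarith
  have par : ‖u + v‖ ^ 2 + ‖u - v‖ ^ 2 = 2 * (‖u‖ ^ 2 + ‖v‖ ^ 2) := by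
    have := parallelogram_law_with_norm ℝ u v
    nlinarith
  have h1 := Real.add_rpow_le_rpow_add (sq_nonneg ‖u‖) (sq_nonneg ‖v‖) hp
  have h2 := (convexOn_rpow hp).2 (Set.mem_Ici.2 (sq_nonneg ‖u + v‖))
    (Set.mem_Ici.2 (sq_nonneg ‖u - v‖)) (by norm_num : (0 : ℝ) ≤ 1/2)
    (by norm_num : (0 : ℝ) ≤ 1/2) (by norm_num)
  simp only [smul_eq_mul] at h2
  have e : (1/2 : ℝ) * ‖u + v‖ ^ 2 + 1/2 * ‖u - v‖ ^ 2 = ‖u‖ ^ 2 + ‖v‖ ^ 2 := by linarith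
  rw [e] at h2
  rw [key, key v, key (u + v), key (u - v)]
  linarith

theorem mrlsr_hypothesis_stability_bound
    {X H : Type*} [NormedAddCommGroup H] [InnerProductSpace ℝ H]
    (κ : ℝ) (hκ : 0 < κ)
    (ev : H →ₗ[ℝ] (X → ℝ))
    (hev : ∀ (f : H) (x : X), |ev f x| ≤ κ * ‖f‖)
    (n : ℕ) (hn : 1 ≤ n) (x : Fin n → X) (y : Fin n → ℝ) (Cy : ℝ)
    (hy : ∀ k, |y k| ≤ Cy)
    (lam m : ℝ) (hlam : 0 < lam) (hm : 2 ≤ m)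
    (i : Fin n) (fZ fZi : H)
    (hfZ : ∀ f : H,
      (1 / n) * (∑ k, (y k - ev fZ (x k)) ^ 2) + lam * ‖fZ‖ ^ m ≤
        (1 / n) * (∑ k, (y k - ev f (x k)) ^ 2) + lam * ‖f‖ ^ m)
    (hfZi : ∀ f : H,
      (1 / n) * (∑ k ∈ Finset.univ.erase i, (y k - ev fZi (x k)) ^ 2) + lam * ‖fZi‖ ^ m ≤
        (1 / n) * (∑ k ∈ Finset.univ.erase i, (y k - ev f (x k)) ^ 2) + lam * ‖f‖ ^ m)
    (C : ℝ) (hC : C = 2 * (Cy + κ * (Cy ^ 2 / lam) ^ (1 / m))) :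
    ‖fZ - fZi‖ ≤ ((2 : ℝ) ^ (m - 2) * C * κ / (lam * n)) ^ (1 / (m - 1)) := by
  have hn0 : (0 : ℝ) < n := by exact_mod_cast hn
  have hCy : 0 ≤ Cy := (abs_nonneg _).trans (hy i)
  have hm0 : 0 < m := by linarith
  have hsq : ∀ k, y k ^ 2 ≤ Cy ^ 2 := fun k => sq_le_sq' (abs_le.1 (hy k)).1 (abs_le.1 (hy k)).2
  set R : ℝ := (Cy ^ 2 / lam) ^ (1 / m) with hR
  have hsum : ∀ s : Finset (Fin n), (1 / (n : ℝ)) * ∑ k ∈ s, y k ^ 2 ≤ Cy ^ 2 := by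
    intro s
    have h1 : ∑ k ∈ s, y k ^ 2 ≤ ∑ k : Fin n, Cy ^ 2 :=
      (Finset.sum_le_sum (fun k _ => hsq k)).trans
        (Finset.sum_le_sum_of_subset_of_nonneg (Finset.subset_univ s)
          (fun _ _ _ => sq_nonneg _))
    simp only [Finset.sum_const, Finset.card_univ, Fintype.card_fin, nsmul_eq_mul] at h1
    rw [one_div, inv_mul_le_iff₀ hn0]
    exact h1
  have hbd : ∀ (s : Finset (Fin n)) (g : H),
      (1 / (n : ℝ)) * (∑ k ∈ s, (y k - ev g (x k)) ^ 2) + lam * ‖g‖ ^ m ≤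
        (1 / (n : ℝ)) * (∑ k ∈ s, (y k - ev 0 (x k)) ^ 2) + lam * ‖(0 : H)‖ ^ m → ‖g‖ ≤ R := by
    intro s g h
    simp only [map_zero, Pi.zero_apply, sub_zero, norm_zero, Real.zero_rpow hm0.ne',
      mul_zero, add_zero] at h
    have h0 : 0 ≤ (1 / (n : ℝ)) * (∑ k ∈ s, (y k - ev g (x k)) ^ 2) :=
      mul_nonneg (by positivity) (Finset.sum_nonneg fun _ _ => sq_nonneg _)
    have h1 : ‖g‖ ^ m ≤ Cy ^ 2 / lam := by
      rw [le_div_iff₀ hlam]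
      linarith [hsum s]
    rw [hR, one_div]
    exact (Real.le_rpow_inv_iff_of_pos (norm_nonneg _) (by positivity) hm0).2 h1
  have hA : ‖fZ‖ ≤ R := hbd _ _ (hfZ 0)
  have hB : ‖fZi‖ ≤ R := hbd _ _ (hfZi 0)
  have hR0 : 0 ≤ R := (norm_nonneg _).trans hA
  set u : H := (1 / 2 : ℝ) • (fZ + fZi) with hu
  set v : H := (1 / 2 : ℝ) • (fZ - fZi) with hv
  have huv : u + v = fZ := by rw [hu, hv]; module
  have huv' : u - v = fZi := by rw [hu, hv]; module
  have hcl := clarkson_aux u v m hm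
  rw [huv, huv'] at hcl
  have hvn : ‖fZ - fZi‖ = 2 * ‖v‖ := by
    rw [hv, norm_smul]; norm_num; ring
  have hun : ‖u‖ ≤ R := by
    rw [hu, norm_smul]
    have := norm_add_le fZ fZi
    norm_num
    linarith
  have h1 := hfZ u
  have h2 := hfZi u
  rw [← Finset.add_sum_erase _ _ (Finset.mem_univ i),
    ← Finset.add_sum_erase _ _ (Finset.mem_univ i)] at h1
  have hconv : 2 * ∑ k ∈ Finset.univ.erase i, (y k - ev u (x k)) ^ 2 ≤
      ∑ k ∈ Finset.univ.erase i, (y k - ev fZ (x k)) ^ 2 +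
      ∑ k ∈ Finset.univ.erase i, (y k - ev fZi (x k)) ^ 2 := by
    rw [Finset.mul_sum, ← Finset.sum_add_distrib]
    refine Finset.sum_le_sum fun k _ => ?_
    rw [← huv, ← huv', map_add, map_sub]
    simp only [Pi.add_apply, Pi.sub_apply]
    nlinarith [sq_nonneg (ev v (x k))]
  have hloss : (y i - ev u (x i)) ^ 2 - (y i - ev fZ (x i)) ^ 2 ≤ C * (κ * ‖v‖) := by
    have e : (y i - ev u (x i)) ^ 2 - (y i - ev fZ (x i)) ^ 2
        = (2 * y i - ev fZ (x i) - ev u (x i)) * ev v (x i) := by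
      rw [← huv, map_add]
      simp only [Pi.add_apply]
      ring
    rw [e]
    refine (le_abs_self _).trans ?_
    rw [abs_mul]
    have a1 := abs_le.1 (hev fZ (x i))
    have a2 := abs_le.1 (hev u (x i))
    have a3 := abs_le.1 (hy i)
    have b1 := mul_le_mul_of_nonneg_left hA hκ.le
    have b2 := mul_le_mul_of_nonneg_left hun hκ.le
    refine mul_le_mul ?_ (hev v (x i)) (abs_nonneg _) ?_
    · rw [hC, abs_le]
      constructor <;> linarith [a1.1, a1.2, a2.1, a2.2, a3.1, a3.2]
    · rw [hC]; positivity
  have hC0 : 0 ≤ C := by rw [hC]; positivity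
  have hmain : 2 * lam * ‖v‖ ^ m ≤ (1 / (n : ℝ)) * (C * (κ * ‖v‖)) := by
    have hi : 0 ≤ 1 / (n : ℝ) := by positivity
    have c1 := mul_le_mul_of_nonneg_left hconv hi
    have c2 := mul_le_mul_of_nonneg_left hloss hi
    have c3 := mul_le_mul_of_nonneg_left hcl hlam.le
    linarith
  have hm1 : 0 < m - 1 := by linarith
  rw [hvn, one_div]
  refine (Real.le_rpow_inv_iff_of_pos (by positivity) (by positivity) hm1).2 ?_
  rcases (norm_nonneg v).eq_or_lt with h0 | h0
  · rw [← h0, mul_zero, Real.zero_rpow hm1.ne']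
    positivity
  · have e1 : ‖v‖ ^ m = ‖v‖ ^ (m - 1) * ‖v‖ := by
      rw [← Real.rpow_add_one h0.ne']; congr 1; ring
    have e2 : (2 : ℝ) ^ (m - 1) = 2 ^ (m - 2) * 2 := by
      rw [← Real.rpow_add_one (by norm_num)]; congr 1; ring
    have h3 : 2 * lam * ‖v‖ ^ (m - 1) ≤ (1 / (n : ℝ)) * (C * κ) := by
      rw [e1] at hmain
      refine le_of_mul_le_mul_right ?_ h0
      linarith
    rw [Real.mul_rpow (by norm_num) h0.le, e2, le_div_iff₀ (by positivity)]
    have h4 : 2 * lam * ‖v‖ ^ (m - 1) * n ≤ C * κ := by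
      rw [one_div, inv_mul_eq_div, le_div_iff₀ hn0] at h3
      exact h3
    have h5 := mul_le_mul_of_nonneg_left h4 (Real.rpow_nonneg (by norm_num : (0:ℝ) ≤ 2) (m - 2))
    linarith
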